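/- Let h, ℓ ∈ S be homogeneous polynomials of degrees 1 and 3 respectively with no common zeros along Y. Then there is a (necessarily unique) S-module homomorphism u from the ideal (x, y³) to S/(x,y) satisfying u(x) = h + (x,y) and u(y³) = ℓ + (x,y), and the kernel of u is exactly the ideal (x², xy, y⁴, xℓ − y³h), regarded as an S-submodule of (x, y³). (This kernel is the saturated ideal of a multiplicity-four structure Z₁ on the line Y with arithmetic genus 0, an extremal curve in H(4,0).) -/

import Mathlib

open MvPolynomial

/-- The pair `(h, ℓ)` has no common zeros along the line `Y = {x = y = 0}`. -/
def NoCommonZerosAlongY {k : Type*} [Field k] (h ℓ : MvPolynomial (Fin 4) k) : Prop :=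
  ∀ c d : k, (c, d) ≠ (0, 0) → eval ![0, 0, c, d] h ≠ 0 ∨ eval ![0, 0, c, d] ℓ ≠ 0

/-!
The relations between `x` and `yⁿ` are generated by the Koszul one, whose coefficients vanish in
`S/(x, y)`, so `u` is well defined. If `h` and `ℓ` have no common zeros along `Y`, then by the
Nullstellensatz their restrictions to `Y` generate an ideal of `k[z, w]` containing powers of `z`
and of `w`; hence these restrictions are coprime, and their relations, too, are generated by the
Koszul one. An element `r x + s yⁿ` of the kernel of `u` thus has `(r, s) ≡ t (ℓ, -h)` modulo
`(x, y)`, which gives `ker u = (x, y)(x, yⁿ) + (xℓ - yⁿh)`.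
-/

section KoszulSyzygies

variable {R : Type*} [CommRing R]

/-- Every syzygy `r a + s b = 0` of the pair `(a, b)` is a multiple of the Koszul syzygy
`b · a - a · b = 0`. Unlike regularity of the sequence `a, b`, this allows `a = 0` when `b` is a
unit. -/
def HasKoszulSyzygies (a b : R) : Prop :=
  ∀ r s : R, r * a + s * b = 0 → ∃ t, r = t * b ∧ s = -(t * a)

namespace HasKoszulSyzygies

theorem of_isRelPrime [IsDomain R] [DecompositionMonoid R] {a b : R} (hab : IsRelPrime a b) :
    HasKoszulSyzygies a b := by
  intro r s hrs
  rcases eq_or_ne b 0 with rfl | hb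
  · obtain ⟨a', ha'⟩ := (isRelPrime_zero_right.1 hab).exists_left_inv
    exact ⟨-(s * a'), by linear_combination a' * hrs - r * ha', by linear_combination -s * ha'⟩
  · obtain ⟨t, rfl⟩ : b ∣ r := hab.symm.dvd_of_dvd_mul_right ⟨-s, by linear_combination hrs⟩
    exact ⟨t, mul_comm b t, mul_right_cancel₀ hb (by linear_combination hrs)⟩

theorem of_ringEquiv {T : Type*} [CommRing T] (e : R ≃+* T) {a b : R}
    (hab : HasKoszulSyzygies (e a) (e b)) : HasKoszulSyzygies a b := by
  intro r s hrs
  obtain ⟨t, hr, hs⟩ := hab (e r) (e s) (by simpa using congrArg e hrs)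
  exact ⟨e.symm t, e.injective (by simpa using hr), e.injective (by simpa using hs)⟩

end HasKoszulSyzygies

end KoszulSyzygies

section SpanPair

section Module

variable {R M N : Type*} [CommRing R] [AddCommGroup M] [Module R M] [AddCommGroup N] [Module R N]
  {a b : M}

theorem exists_linearMap_span_pair {m n : N}
    (hsyz : ∀ r s : R, r • a + s • b = 0 → r • m + s • n = 0) :
    ∃ u : Submodule.span R {a, b} →ₗ[R] N,
      u ⟨a, Submodule.subset_span (by simp)⟩ = m ∧ u ⟨b, Submodule.subset_span (by simp)⟩ = n := by
  let g : R × R →ₗ[R] Submodule.span R {a, b} :=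
    (LinearMap.toSpanSingleton R _ ⟨a, Submodule.subset_span (by simp)⟩).coprod
      (LinearMap.toSpanSingleton R _ ⟨b, Submodule.subset_span (by simp)⟩)
  let f : R × R →ₗ[R] N :=
    (LinearMap.toSpanSingleton R N m).coprod (LinearMap.toSpanSingleton R N n)
  have hg : Function.Surjective g := by
    rintro ⟨y, hy⟩
    obtain ⟨r, s, rfl⟩ := Submodule.mem_span_pair.1 hy
    exact ⟨(r, s), rfl⟩
  have hker : LinearMap.ker g ≤ LinearMap.ker f := fun p hp ↦
    hsyz p.1 p.2 (congrArg Subtype.val hp)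
  let u := (LinearMap.ker g).liftQ f hker ∘ₗ (g.quotKerEquivOfSurjective hg).symm.toLinearMap
  have hu (p : R × R) : u (g p) = f p := by simp [u]
  exact ⟨u, by simpa [g, f] using hu (1, 0), by simpa [g, f] using hu (0, 1)⟩

theorem linearMap_span_pair_ext {u u' : Submodule.span R {a, b} →ₗ[R] N}
    (ha : u ⟨a, Submodule.subset_span (by simp)⟩ = u' ⟨a, Submodule.subset_span (by simp)⟩)
    (hb : u ⟨b, Submodule.subset_span (by simp)⟩ = u' ⟨b, Submodule.subset_span (by simp)⟩) :
    u = u' := by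
  refine (Submodule.linearMap_eq_iff_of_eq_span u u' rfl).2 ?_
  rintro ⟨_, rfl | rfl⟩
  exacts [ha, hb]

theorem linearMap_span_pair_apply (u : Submodule.span R {a, b} →ₗ[R] N) {r s : R}
    (hrs : r • a + s • b ∈ Submodule.span R {a, b}) :
    u ⟨r • a + s • b, hrs⟩ = r • u ⟨a, Submodule.subset_span (by simp)⟩ +
      s • u ⟨b, Submodule.subset_span (by simp)⟩ := by
  rw [← map_smul, ← map_smul, ← map_add]
  rfl

end Module

variable {R : Type*} [CommRing R] {P : Ideal R} {a b h ℓ : R}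

theorem HasKoszulSyzygies.exists_linearMap_quotient (hab : HasKoszulSyzygies a b)
    (ha : a ∈ P) (hb : b ∈ P) (h ℓ : R) :
    ∃ u : Ideal.span {a, b} →ₗ[R] R ⧸ P,
      u ⟨a, Ideal.subset_span (by simp)⟩ = Ideal.Quotient.mk P h ∧
        u ⟨b, Ideal.subset_span (by simp)⟩ = Ideal.Quotient.mk P ℓ := by
  refine exists_linearMap_span_pair fun r s hrs ↦ ?_
  obtain ⟨t, rfl, rfl⟩ := hab r s hrs
  refine Ideal.Quotient.eq_zero_iff_mem.2 (P.add_mem ?_ ?_)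
  · exact P.mul_mem_right _ (P.mul_mem_left _ hb)
  · exact P.mul_mem_right _ (P.neg_mem (P.mul_mem_left _ ha))

section Kernel

variable {u : Ideal.span {a, b} →ₗ[R] R ⧸ P}
  (hua : u ⟨a, Ideal.subset_span (by simp)⟩ = Ideal.Quotient.mk P h)
  (hub : u ⟨b, Ideal.subset_span (by simp)⟩ = Ideal.Quotient.mk P ℓ)

include hua hub

theorem mul_span_pair_sup_span_le_map_ker :
    P * Ideal.span {a, b} ⊔ Ideal.span {a * ℓ - b * h} ≤
      (LinearMap.ker u).map (Ideal.span {a, b}).subtype := by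
  refine sup_le (Ideal.mul_le.2 fun p hp i hi ↦ ?_) ((Ideal.span_singleton_le_iff_mem _).2 ?_)
  · refine ⟨p • ⟨i, hi⟩, ?_, rfl⟩
    rw [SetLike.mem_coe, LinearMap.mem_ker, map_smul]
    exact Module.mem_annihilator.1 (Ideal.annihilator_quotient.ge hp) _
  · have hmem : ℓ • a + (-h) • b ∈ Ideal.span {a, b} := Submodule.mem_span_pair.2 ⟨ℓ, -h, rfl⟩
    refine ⟨⟨ℓ • a + (-h) • b, hmem⟩, ?_, ?_⟩
    · have hzero : ℓ * h + -h * ℓ = 0 := by ring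
      rw [SetLike.mem_coe, LinearMap.mem_ker, linearMap_span_pair_apply, hua, hub]
      exact congrArg (Ideal.Quotient.mk P) hzero
    · simp only [Submodule.subtype_apply, smul_eq_mul]
      ring

theorem HasKoszulSyzygies.map_ker_eq
    (hsyz : HasKoszulSyzygies (Ideal.Quotient.mk P h) (Ideal.Quotient.mk P ℓ)) :
    (LinearMap.ker u).map (Ideal.span {a, b}).subtype =
      P * Ideal.span {a, b} ⊔ Ideal.span {a * ℓ - b * h} := by
  refine le_antisymm ?_ (mul_span_pair_sup_span_le_map_ker hua hub)
  rintro _ ⟨⟨m, hm⟩, hker, rfl⟩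
  obtain ⟨r, s, rfl⟩ := Submodule.mem_span_pair.1 hm
  rw [SetLike.mem_coe, LinearMap.mem_ker, linearMap_span_pair_apply, hua, hub] at hker
  obtain ⟨t', hr', hs'⟩ := hsyz (Ideal.Quotient.mk P r) (Ideal.Quotient.mk P s) hker
  obtain ⟨t, rfl⟩ := Ideal.Quotient.mk_surjective t'
  have hr : r - t * ℓ ∈ P := Ideal.Quotient.eq.1 (by rw [hr', map_mul])
  have hs : s + t * h ∈ P := by
    rw [← Ideal.Quotient.eq_zero_iff_mem, map_add, map_mul, hs', neg_add_cancel]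
  have ha : a ∈ Ideal.span {a, b} := Ideal.subset_span (by simp)
  have hb : b ∈ Ideal.span {a, b} := Ideal.subset_span (by simp)
  have hdecomp : (r - t * ℓ) * a + (s + t * h) * b + t * (a * ℓ - b * h) = r • a + s • b := by
    simp only [smul_eq_mul]
    ring
  change r • a + s • b ∈ _
  rw [← hdecomp]
  exact Submodule.add_mem_sup (add_mem (Ideal.mul_mem_mul hr ha) (Ideal.mul_mem_mul hs hb))
    (Ideal.mul_mem_left _ t (Ideal.mem_span_singleton_self _))

end Kernel

theorem span_pair_mul_span_pair_pow (x y : R) {n : ℕ} (hn : n ≠ 0) :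
    Ideal.span {x, y} * Ideal.span {x, y ^ n} = Ideal.span {x ^ 2, x * y, y ^ (n + 1)} := by
  have hmem : x * y ^ n ∈ Ideal.span {x ^ 2, x * y, y ^ (n + 1)} :=
    Ideal.mem_of_dvd _ (mul_dvd_mul_left x (dvd_pow_self y hn)) (Ideal.subset_span (by simp))
  rw [Ideal.span_pair_mul_span_pair, ← pow_two, mul_comm y x, ← pow_succ', Set.insert_comm]
  exact Submodule.span_insert_eq_span hmem

end SpanPair

section KillCompl

variable {σ τ R : Type*} {f : σ → τ} (hf : f.Injective)

theorem killCompl_X_apply [CommSemiring R] (i : σ) :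
    killCompl hf (X (f i) : MvPolynomial τ R) = X i := by
  rw [← rename_X, killCompl_rename_app]

theorem killCompl_X_of_notMem_range [CommSemiring R] {i : τ} (hi : i ∉ Set.range f) :
    killCompl hf (X i : MvPolynomial τ R) = 0 := by
  rw [killCompl, aeval_X, dif_neg hi]

theorem eval_killCompl [CommSemiring R] (v : σ → R) (p : MvPolynomial τ R) :
    eval v (killCompl hf p) = eval (Function.extend f v 0) p := by
  suffices (aeval v).comp (killCompl hf) = aeval (R := R) (Function.extend f v 0) by
    simpa [coe_aeval_eq_eval] using DFunLike.congr_fun this p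
  ext i
  by_cases hi : i ∈ Set.range f
  · obtain ⟨j, rfl⟩ := hi
    simp [killCompl_X_apply, hf.extend_apply]
  · simp [killCompl_X_of_notMem_range hf hi, Function.extend_apply' _ _ _ hi]

theorem sub_rename_killCompl_mem_span [CommRing R] (p : MvPolynomial τ R) :
    p - rename f (killCompl hf p) ∈ Ideal.span (X '' (Set.range f)ᶜ) := by
  set I : Ideal (MvPolynomial τ R) := Ideal.span (X '' (Set.range f)ᶜ)
  suffices Ideal.Quotient.mkₐ R I =
      (Ideal.Quotient.mkₐ R I).comp ((rename f).comp (killCompl hf)) from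
    Ideal.Quotient.eq.1 (DFunLike.congr_fun this p)
  ext i
  by_cases hi : i ∈ Set.range f
  · obtain ⟨j, rfl⟩ := hi
    simp [killCompl_X_apply]
  · simpa [killCompl_X_of_notMem_range hf hi] using
      Ideal.Quotient.eq_zero_iff_mem.2 (Ideal.subset_span (Set.mem_image_of_mem X hi))

theorem ker_killCompl [CommRing R] :
    RingHom.ker (killCompl (R := R) hf) = Ideal.span (X '' (Set.range f)ᶜ) := by
  refine le_antisymm (fun p hp ↦ ?_) (Ideal.span_le.2 ?_)
  · simpa [RingHom.mem_ker.1 hp] using sub_rename_killCompl_mem_span hf p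
  · rintro _ ⟨i, hi, rfl⟩
    exact killCompl_X_of_notMem_range hf hi

end KillCompl

section Coprimality

variable {σ : Type*}

theorem isRelPrime_X {R : Type*} [CommRing R] [IsDomain R] {i j : σ} (hij : i ≠ j) :
    IsRelPrime (X i : MvPolynomial σ R) (X j) :=
  X_prime.irreducible.isRelPrime_iff_not_dvd.2 fun hdvd ↦ hij (X_dvd_X.1 hdvd)

theorem isRelPrime_of_forall_common_zero_eq_zero {k : Type*} [Field k] [IsAlgClosed k] [Finite σ]
    [Nontrivial σ] {p q : MvPolynomial σ k} (hpq : ∀ v, eval v p = 0 → eval v q = 0 → v = 0) :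
    IsRelPrime p q := by
  have hX (i : σ) : X i ∈ (Ideal.span {p, q}).radical := by
    rw [← vanishingIdeal_zeroLocus_eq_radical (K := k), zeroLocus_span]
    intro v hv
    obtain rfl : v = 0 := hpq v (hv p (by simp)) (hv q (by simp))
    simp
  intro d hdp hdq
  have hd (i : σ) : ∃ N, d ∣ X i ^ N := by
    obtain ⟨N, hN⟩ := hX i
    obtain ⟨r, s, hrs⟩ := Ideal.mem_span_pair.1 hN
    exact ⟨N, hrs ▸ (hdp.mul_left r).add (hdq.mul_left s)⟩
  obtain ⟨i, j, hij⟩ := exists_pair_ne σ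
  obtain ⟨N, hN⟩ := hd i
  obtain ⟨M, hM⟩ := hd j
  exact (isRelPrime_X hij).pow hN hM

end Coprimality

section Line

variable {R : Type*} [CommRing R]

theorem injective_vec_two_three : Function.Injective (![2, 3] : Fin 2 → Fin 4) := by decide

/-- Restriction of polynomials from `P³` to the line `Y`, that is, `R[x, y, z, w] → R[z, w]` with
`x, y ↦ 0`. The variables `z, w` of the target are `X 0, X 1`. -/
noncomputable def restrictToLine : MvPolynomial (Fin 4) R →ₐ[R] MvPolynomial (Fin 2) R :=
  killCompl injective_vec_two_three

theorem restrictToLine_surjective : Function.Surjective (restrictToLine (R := R)) := fun p ↦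
  ⟨rename ![2, 3] p, killCompl_rename_app injective_vec_two_three p⟩

theorem ker_restrictToLine : RingHom.ker (restrictToLine (R := R)) = Ideal.span {X 0, X 1} := by
  have hcompl : (Set.range (![2, 3] : Fin 2 → Fin 4))ᶜ = {0, 1} := by
    ext i
    fin_cases i <;> simp
  rw [restrictToLine, ker_killCompl, hcompl, Set.image_pair]

theorem eval_restrictToLine (v : Fin 2 → R) (p : MvPolynomial (Fin 4) R) :
    eval v (restrictToLine p) = eval ![0, 0, v 0, v 1] p := by
  have hextend : Function.extend ![2, 3] v 0 = ![0, 0, v 0, v 1] := by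
    ext i
    fin_cases i
    · exact Function.extend_apply' _ _ _ (by simp)
    · exact Function.extend_apply' _ _ _ (by simp)
    · exact injective_vec_two_three.extend_apply v 0 0
    · exact injective_vec_two_three.extend_apply v 0 1
  rw [restrictToLine, eval_killCompl, hextend]

variable {k : Type*} [Field k] [IsAlgClosed k] {h ℓ : MvPolynomial (Fin 4) k}

theorem NoCommonZerosAlongY.isRelPrime_restrictToLine (hhℓ : NoCommonZerosAlongY h ℓ) :
    IsRelPrime (restrictToLine h) (restrictToLine ℓ) := by
  refine isRelPrime_of_forall_common_zero_eq_zero fun v hh hℓ ↦ ?_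
  rw [eval_restrictToLine] at hh hℓ
  by_contra hv
  have hzw : (v 0, v 1) ≠ (0, 0) := by simpa [funext_iff, Fin.forall_fin_two] using hv
  exact (hhℓ _ _ hzw).elim (· hh) (· hℓ)

theorem NoCommonZerosAlongY.hasKoszulSyzygies_quotient (hhℓ : NoCommonZerosAlongY h ℓ) :
    HasKoszulSyzygies (Ideal.Quotient.mk (Ideal.span {X 0, X 1}) h)
      (Ideal.Quotient.mk (Ideal.span {X 0, X 1}) ℓ) := by
  rw [← ker_restrictToLine]
  exact .of_ringEquiv (RingHom.quotientKerEquivOfSurjective restrictToLine_surjective)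
    (.of_isRelPrime hhℓ.isRelPrime_restrictToLine)

theorem stmt_18_general {n : ℕ} (hn : n ≠ 0) (hhℓ : NoCommonZerosAlongY h ℓ) :
    ∃ u : (Ideal.span {X 0, X 1 ^ n} : Ideal (MvPolynomial (Fin 4) k)) →ₗ[MvPolynomial (Fin 4) k]
        (MvPolynomial (Fin 4) k ⧸ (Ideal.span {X 0, X 1} : Ideal (MvPolynomial (Fin 4) k))),
      (u ⟨X 0, Ideal.subset_span (by simp)⟩ = Ideal.Quotient.mk _ h ∧
        u ⟨X 1 ^ n, Ideal.subset_span (by simp)⟩ = Ideal.Quotient.mk _ ℓ) ∧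
      (∀ u' : (Ideal.span {X 0, X 1 ^ n} : Ideal (MvPolynomial (Fin 4) k)) →ₗ[
          MvPolynomial (Fin 4) k]
          (MvPolynomial (Fin 4) k ⧸ (Ideal.span {X 0, X 1} : Ideal (MvPolynomial (Fin 4) k))),
        (u' ⟨X 0, Ideal.subset_span (by simp)⟩ = Ideal.Quotient.mk _ h ∧
          u' ⟨X 1 ^ n, Ideal.subset_span (by simp)⟩ = Ideal.Quotient.mk _ ℓ) → u' = u) ∧
      LinearMap.ker u = Submodule.comap
        (Submodule.subtype (Ideal.span {X 0, X 1 ^ n} : Ideal (MvPolynomial (Fin 4) k)))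
        (Ideal.span {X 0 ^ 2, X 0 * X 1, X 1 ^ (n + 1), X 0 * ℓ - X 1 ^ n * h}) := by
  have hxy : HasKoszulSyzygies (X 0 : MvPolynomial (Fin 4) k) (X 1 ^ n) :=
    .of_isRelPrime (isRelPrime_X zero_ne_one).pow_right
  obtain ⟨u, hux, huy⟩ := hxy.exists_linearMap_quotient (P := Ideal.span {X 0, X 1})
    (Ideal.subset_span (by simp)) (Ideal.pow_mem_of_mem _ (Ideal.subset_span (by simp)) n
      (Nat.pos_of_ne_zero hn)) h ℓ
  refine ⟨u, ⟨hux, huy⟩, fun u' ⟨hux', huy'⟩ ↦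
    linearMap_span_pair_ext (hux'.trans hux.symm) (huy'.trans huy.symm), ?_⟩
  have hker := hhℓ.hasKoszulSyzygies_quotient.map_ker_eq hux huy
  rw [span_pair_mul_span_pair_pow _ _ hn, ← Ideal.span_union, Set.insert_union, Set.insert_union,
    Set.singleton_union] at hker
  rw [← hker, Submodule.comap_map_eq_of_injective (Submodule.subtype_injective _)]

end Line

/-- for `h, ℓ` homogeneous of degrees `1, 3` with no common zeros along
`Y`, there is a unique `S`-module homomorphism `u : (x, y³) → S/(x,y)` with `u(x) = h̄`,
`u(y³) = ℓ̄`, and its kernel is the ideal `(x², xy, y⁴, xℓ − y³h)`, the saturated ideal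
of an extremal multiplicity-four structure `Z₁` of genus `0` on `Y`. -/
theorem stmt_18 {k : Type*} [Field k] [IsAlgClosed k]
    (h ℓ : MvPolynomial (Fin 4) k)
    (hh : h.IsHomogeneous 1) (hℓ : ℓ.IsHomogeneous 3)
    (hhℓ : NoCommonZerosAlongY h ℓ) :
    ∃ u : (Ideal.span {X 0, X 1 ^ 3} : Ideal (MvPolynomial (Fin 4) k)) →ₗ[MvPolynomial (Fin 4) k]
        (MvPolynomial (Fin 4) k ⧸ (Ideal.span {X 0, X 1} : Ideal (MvPolynomial (Fin 4) k))),
      (u ⟨X 0, Ideal.subset_span (by simp)⟩ = Ideal.Quotient.mk _ h ∧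
        u ⟨X 1 ^ 3, Ideal.subset_span (by simp)⟩ = Ideal.Quotient.mk _ ℓ) ∧
      (∀ u' : (Ideal.span {X 0, X 1 ^ 3} : Ideal (MvPolynomial (Fin 4) k)) →ₗ[MvPolynomial (Fin 4) k]
          (MvPolynomial (Fin 4) k ⧸ (Ideal.span {X 0, X 1} : Ideal (MvPolynomial (Fin 4) k))),
        (u' ⟨X 0, Ideal.subset_span (by simp)⟩ = Ideal.Quotient.mk _ h ∧
          u' ⟨X 1 ^ 3, Ideal.subset_span (by simp)⟩ = Ideal.Quotient.mk _ ℓ) → u' = u) ∧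
      LinearMap.ker u = Submodule.comap
        (Submodule.subtype (Ideal.span {X 0, X 1 ^ 3} : Ideal (MvPolynomial (Fin 4) k)))
        (Ideal.span {X 0 ^ 2, X 0 * X 1, X 1 ^ 4, X 0 * ℓ - X 1 ^ 3 * h}) :=
  stmt_18_general three_ne_zero hhℓ
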